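/- Let X and Y be finite nonempty alphabets, P_X a probability mass function on X, W a channel with W(y|x) > 0 for all x, y and Σ_y W(y|x) = 1 for each x, and R ∈ ℝ. Then min over channels Q of { D(Q‖W|P_X) + [ I_Q(X;Y) − R ]_+ } = min over probability mass functions V on Y of max_{ρ∈[0,1]} { −(1+ρ) Σ_x P_X(x) log₂( Σ_y ( W(y|x) V(y)^ρ )^{1/(1+ρ)} ) − ρR }. -/

import Mathlib

/-- Weighted conditional divergence `D(Q‖W|P_X)` (base-2 logarithm). -/
noncomputable def condDiv2 {X Y : Type*} [Fintype X] [Fintype Y]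
    (P : X → ℝ) (Q W : X → Y → ℝ) : ℝ :=
  ∑ x, P x * ∑ y, Q x y * Real.logb 2 (Q x y / W x y)

/-- Mutual information `I_Q(X;Y)` of the joint distribution `P_X(x) Q(y|x)` (base 2). -/
noncomputable def mutInfo2 {X Y : Type*} [Fintype X] [Fintype Y]
    (P : X → ℝ) (Q : X → Y → ℝ) : ℝ :=
  ∑ x, ∑ y, P x * Q x y * Real.logb 2 (Q x y / ∑ x', P x' * Q x' y)

/-!
Fix an output law `V` and replace `I_Q(X;Y)` by the larger `D(Q‖V|P)`; the minimum over `V` of the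
latter is attained at the output law of `Q` and gives `I_Q(X;Y)` back. With
`A_ρ = (W V^ρ)^{1/(1+ρ)}` one has `D(Q‖W|P) + ρ D(Q‖V|P) = (1+ρ) D(Q‖A_ρ|P)`, so Gibbs' inequality
bounds the Lagrangian below by `-(1+ρ) Σ_x P(x) log₂ Σ_y A_ρ(x,y)`, with equality at the channel
`Q_ρ` proportional to `A_ρ`. As `ρ` runs through `[0,1]` the constraint value `D(Q_ρ‖V|P) - R` is
continuous, so some `ρ` satisfies complementary slackness and there is no duality gap.
-/

/-- The Kullback–Leibler divergence (base 2) of nonnegative weights `q` and `a`, not assumed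
normalized; it represents the divergence only when `q` vanishes wherever `a` does, because
`x / 0 = 0`. -/
noncomputable def relEntropy2 {Y : Type*} [Fintype Y] (q a : Y → ℝ) : ℝ :=
  ∑ y, q y * Real.logb 2 (q y / a y)

/-- The output law on `Y` induced by the input law `P` and the channel `Q`. -/
def outputDist {X Y : Type*} [Fintype X] (P : X → ℝ) (Q : X → Y → ℝ) (y : Y) : ℝ :=
  ∑ x, P x * Q x y

/-- Absolute continuity `Q(·|x) ≪ A(·|x)` for every input `x` in the support of `P`. -/
def CondAbsCont {X Y : Type*} (P : X → ℝ) (Q A : X → Y → ℝ) : Prop :=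
  ∀ x y, P x ≠ 0 → A x y = 0 → Q x y = 0

/-- The unnormalized geometric mixture `(W(y|x) V(y)^ρ)^{1/(1+ρ)}` of a channel and an output
law. -/
noncomputable def tiltedKernel {X Y : Type*} (W : X → Y → ℝ) (V : Y → ℝ) (ρ : ℝ) (x : X) (y : Y) :
    ℝ :=
  (W x y * V y ^ ρ) ^ (1 / (1 + ρ))

/-- The channel proportional to a kernel `A` of nonnegative weights with nonzero row sums. -/
noncomputable def rowNormalize {X Y : Type*} [Fintype Y] (A : X → Y → ℝ) (x : X) (y : Y) : ℝ :=
  A x y / ∑ y', A x y'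

/-- The Gallager function of the constant-composition ensemble, that is, the dual objective
without its rate term `-ρR`. -/
noncomputable def gallagerFunction {X Y : Type*} [Fintype X] [Fintype Y]
    (P : X → ℝ) (W : X → Y → ℝ) (V : Y → ℝ) (ρ : ℝ) : ℝ :=
  -(1 + ρ) * ∑ x, P x * Real.logb 2 (∑ y, tiltedKernel W V ρ x y)

theorem sum_mul_log_sum_div_sum_le {ι : Type*} (s : Finset ι) {q a : ι → ℝ}
    (hq : ∀ i ∈ s, 0 ≤ q i) (ha : ∀ i ∈ s, 0 ≤ a i) (hqa : ∀ i ∈ s, a i = 0 → q i = 0) :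
    (∑ i ∈ s, q i) * Real.log ((∑ i ∈ s, q i) / ∑ i ∈ s, a i) ≤
      ∑ i ∈ s, q i * Real.log (q i / a i) := by
  have cancel : ∀ i ∈ s, a i * (q i / a i) = q i := fun i hi =>
    mul_div_cancel_of_imp' (hqa i hi)
  rcases (Finset.sum_nonneg ha).eq_or_lt with hsum | hsum
  · have hq0 : ∀ i ∈ s, q i = 0 := fun i hi =>
      hqa i hi ((Finset.sum_eq_zero_iff_of_nonneg ha).mp hsum.symm i hi)
    rw [Finset.sum_eq_zero hq0, zero_mul]
    exact (Finset.sum_eq_zero fun i hi => by rw [hq0 i hi, zero_mul]).ge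
  · have jensen := Real.convexOn_mul_log.map_centerMass_le ha hsum (p := fun i => q i / a i)
      fun i hi => div_nonneg (hq i hi) (ha i hi)
    have cancel_log : ∀ i ∈ s, a i * (q i / a i * Real.log (q i / a i)) =
        q i * Real.log (q i / a i) := fun i hi => by rw [← mul_assoc, cancel i hi]
    simp only [Finset.centerMass, smul_eq_mul, Function.comp_apply] at jensen
    rw [Finset.sum_congr rfl cancel, Finset.sum_congr rfl cancel_log, mul_assoc,
      inv_mul_eq_div _ (∑ i ∈ s, q i)] at jensen
    exact le_of_mul_le_mul_left jensen (inv_pos.mpr hsum)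

theorem exists_max_zero_eq_mul_of_continuousOn {g : ℝ → ℝ}
    (hg : ContinuousOn g (Set.Icc 0 1)) : ∃ ρ ∈ Set.Icc (0 : ℝ) 1, max (g ρ) 0 = ρ * g ρ := by
  rcases le_total 0 (g 1) with h1 | h1
  · exact ⟨1, Set.right_mem_Icc.mpr zero_le_one, by rw [max_eq_left h1, one_mul]⟩
  rcases le_total (g 0) 0 with h0 | h0
  · exact ⟨0, Set.left_mem_Icc.mpr zero_le_one, by rw [max_eq_right h0, zero_mul]⟩
  obtain ⟨ρ, hρ, hgρ⟩ := intermediate_value_Icc' zero_le_one hg ⟨h1, h0⟩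
  exact ⟨ρ, hρ, by rw [hgρ, max_self, mul_zero]⟩

theorem mul_le_max_zero_of_mem_Icc {ρ : ℝ} (hρ : ρ ∈ Set.Icc (0 : ℝ) 1) (t : ℝ) :
    ρ * t ≤ max t 0 :=
  (mul_le_mul_of_nonneg_left (le_max_left t 0) hρ.1).trans
    (mul_le_of_le_one_left (le_max_right t 0) hρ.2)

section OutputDist

variable {X Y : Type*} [Fintype X] {P : X → ℝ} {Q : X → Y → ℝ}

theorem outputDist_nonneg (hP : ∀ x, 0 ≤ P x) (hQ : ∀ x y, 0 ≤ Q x y) (y : Y) :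
    0 ≤ outputDist P Q y :=
  Finset.sum_nonneg fun x _ => mul_nonneg (hP x) (hQ x y)

theorem condAbsCont_outputDist (hP : ∀ x, 0 ≤ P x) (hQ : ∀ x y, 0 ≤ Q x y) :
    CondAbsCont P Q fun _ => outputDist P Q := fun x y hx hy =>
  (mul_eq_zero_iff_left hx).mp <| (Finset.sum_eq_zero_iff_of_nonneg fun x' _ =>
    mul_nonneg (hP x') (hQ x' y)).mp hy x (Finset.mem_univ x)

end OutputDist

section Divergence

variable {X Y : Type*} [Fintype Y]

theorem neg_logb_sum_le_relEntropy2 {q a : Y → ℝ} (hq : q ∈ stdSimplex ℝ Y) (ha : ∀ y, 0 ≤ a y)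
    (hqa : ∀ y, a y = 0 → q y = 0) : -Real.logb 2 (∑ y, a y) ≤ relEntropy2 q a := by
  have hlog := sum_mul_log_sum_div_sum_le Finset.univ (fun y _ => hq.1 y) (fun y _ => ha y)
    fun y _ => hqa y
  rw [hq.2, one_mul, one_div, Real.log_inv] at hlog
  simp only [relEntropy2, Real.logb, ← neg_div, ← mul_div_assoc, ← Finset.sum_div]
  gcongr

theorem ne_zero_of_mem_stdSimplex {q : Y → ℝ} (hq : q ∈ stdSimplex ℝ Y) : q ≠ 0 := by
  rintro rfl
  simpa using hq.2

theorem rowNormalize_mem_stdSimplex {A : X → Y → ℝ} {x : X} (hA : ∀ y, 0 ≤ A x y)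
    (hsum : ∑ y, A x y ≠ 0) : rowNormalize A x ∈ stdSimplex ℝ Y :=
  ⟨fun y => div_nonneg (hA y) (Finset.sum_nonneg fun y _ => hA y),
    (Finset.sum_div _ _ _).symm.trans (div_self hsum)⟩

variable [Fintype X] {P : X → ℝ} {Q W : X → Y → ℝ} {V : Y → ℝ} {ρ : ℝ}

theorem condDiv2_eq_sum_mul_relEntropy2 :
    condDiv2 P Q W = ∑ x, P x * relEntropy2 (Q x) (W x) :=
  rfl

theorem neg_sum_mul_logb_sum_le_condDiv2 (hP : ∀ x, 0 ≤ P x) (hQ : ∀ x, Q x ∈ stdSimplex ℝ Y)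
    (hW : ∀ x y, 0 ≤ W x y) (hQW : CondAbsCont P Q W) :
    -∑ x, P x * Real.logb 2 (∑ y, W x y) ≤ condDiv2 P Q W := by
  rw [condDiv2_eq_sum_mul_relEntropy2, ← Finset.sum_neg_distrib]
  refine Finset.sum_le_sum fun x _ => ?_
  rcases (hP x).eq_or_lt with hx | hx
  · simp [← hx]
  · rw [← mul_neg]
    exact mul_le_mul_of_nonneg_left
      (neg_logb_sum_le_relEntropy2 (hQ x) (hW x) fun y => hQW x y hx.ne') hx.le

theorem condDiv2_rowNormalize_self (hW : ∀ x, ∑ y, W x y ≠ 0) :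
    condDiv2 P (rowNormalize W) W = -∑ x, P x * Real.logb 2 (∑ y, W x y) := by
  have hterm : ∀ x y, rowNormalize W x y * Real.logb 2 (rowNormalize W x y / W x y) =
      rowNormalize W x y * -Real.logb 2 (∑ y', W x y') := fun x y => by
    rcases eq_or_ne (W x y) 0 with hxy | hxy
    · simp [rowNormalize, hxy]
    · rw [rowNormalize, div_div_cancel_left' hxy, Real.logb_inv]
  have hrow : ∀ x, ∑ y, rowNormalize W x y = 1 := fun x =>
    (Finset.sum_div _ _ _).symm.trans (div_self (hW x))
  simp only [condDiv2, hterm, ← Finset.sum_mul, hrow, one_mul, mul_neg, Finset.sum_neg_distrib]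

theorem continuous_mul_logb_div (b a : ℝ) : Continuous fun q : ℝ => q * Real.logb b (q / a) := by
  rcases eq_or_ne a 0 with rfl | ha
  · simpa using continuous_const
  have hscale : (fun q : ℝ => q * Real.logb b (q / a)) =
      fun q => a * (q / a * Real.log (q / a)) / Real.log b := by
    funext q
    rw [Real.logb, ← mul_assoc, mul_div_cancel₀ q ha, mul_div_assoc]
  rw [hscale]
  fun_prop

theorem continuous_condDiv2 : Continuous fun Q : X → Y → ℝ => condDiv2 P Q W := by
  refine continuous_finsetSum _ fun x _ => continuous_const.mul ?_
  exact continuous_finsetSum _ fun y _ =>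
    (continuous_mul_logb_div 2 (W x y)).comp (continuous_apply_apply x y)

theorem outputDist_mem_stdSimplex (hP : P ∈ stdSimplex ℝ X) (hQ : ∀ x, Q x ∈ stdSimplex ℝ Y) :
    outputDist P Q ∈ stdSimplex ℝ Y := by
  refine ⟨outputDist_nonneg hP.1 fun x => (hQ x).1, ?_⟩
  simp only [outputDist]
  rw [Finset.sum_comm]
  simp only [← Finset.mul_sum, (hQ _).2, mul_one, hP.2]

theorem mutInfo2_eq_condDiv2_outputDist :
    mutInfo2 P Q = condDiv2 P Q fun _ => outputDist P Q := by
  simp only [mutInfo2, condDiv2, outputDist, Finset.mul_sum, mul_assoc]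

theorem condDiv2_const_eq_mutInfo2_add (hP : ∀ x, 0 ≤ P x) (hQ : ∀ x y, 0 ≤ Q x y)
    (hQV : CondAbsCont P Q fun _ => V) :
    condDiv2 P Q (fun _ => V) = mutInfo2 P Q + relEntropy2 (outputDist P Q) V := by
  have hterm : ∀ x y, P x * (Q x y * Real.logb 2 (Q x y / V y)) =
      P x * (Q x y * Real.logb 2 (Q x y / outputDist P Q y)) +
        P x * Q x y * Real.logb 2 (outputDist P Q y / V y) := fun x y => by
    by_cases hx : P x = 0
    · simp [hx]
    by_cases hxy : Q x y = 0
    · simp [hxy]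
    have hVy : V y ≠ 0 := mt (hQV x y hx) hxy
    have hout : outputDist P Q y ≠ 0 := mt (condAbsCont_outputDist hP hQ x y hx) hxy
    rw [Real.logb_div hxy hVy, Real.logb_div hxy hout, Real.logb_div hout hVy]
    ring
  have hout : relEntropy2 (outputDist P Q) V =
      ∑ x, ∑ y, P x * Q x y * Real.logb 2 (outputDist P Q y / V y) := by
    rw [relEntropy2, Finset.sum_comm]
    exact Finset.sum_congr rfl fun y _ => Finset.sum_mul _ _ _
  rw [mutInfo2_eq_condDiv2_outputDist, hout]
  simp only [condDiv2, Finset.mul_sum, hterm, Finset.sum_add_distrib]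

theorem mutInfo2_le_condDiv2_const (hP : P ∈ stdSimplex ℝ X) (hQ : ∀ x, Q x ∈ stdSimplex ℝ Y)
    (hV : V ∈ stdSimplex ℝ Y) (hQV : CondAbsCont P Q fun _ => V) :
    mutInfo2 P Q ≤ condDiv2 P Q fun _ => V := by
  have hout : ∀ y, V y = 0 → outputDist P Q y = 0 := fun y hy =>
    Finset.sum_eq_zero fun x _ => mul_eq_zero.mpr <| or_iff_not_imp_left.mpr fun hx =>
      hQV x y hx hy
  have hgibbs := neg_logb_sum_le_relEntropy2 (outputDist_mem_stdSimplex hP hQ) hV.1 hout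
  rw [hV.2, Real.logb_one, neg_zero] at hgibbs
  rw [condDiv2_const_eq_mutInfo2_add hP.1 (fun x => (hQ x).1) hQV]
  exact le_add_of_nonneg_right hgibbs

theorem condDiv2_indicator_support (hQV : CondAbsCont P Q fun _ => V) :
    condDiv2 P Q (fun x => (Function.support V).indicator (W x)) = condDiv2 P Q W := by
  simp only [condDiv2, Finset.mul_sum]
  refine Finset.sum_congr rfl fun x _ => Finset.sum_congr rfl fun y _ => ?_
  by_cases hx : P x = 0
  · simp [hx]
  by_cases hy : V y = 0
  · simp [hQV x y hx hy]
  · rw [Set.indicator_of_mem (Function.mem_support.mpr hy)]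

end Divergence

theorem mul_logb_add_mul_mul_logb {b q w v ρ : ℝ} (hρ : -1 < ρ) (hw : 0 ≤ w) (hv : 0 ≤ v)
    (hqw : w = 0 → q = 0) (hqv : v = 0 → q = 0) :
    q * Real.logb b (q / w) + ρ * (q * Real.logb b (q / v)) =
      (1 + ρ) * (q * Real.logb b (q / (w * v ^ ρ) ^ (1 / (1 + ρ)))) := by
  rcases eq_or_ne q 0 with rfl | hq
  · simp only [zero_mul, mul_zero, add_zero]
  have hw : 0 < w := hw.lt_of_ne' (mt hqw hq)
  have hv : 0 < v := hv.lt_of_ne' (mt hqv hq)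
  have hvρ : 0 < v ^ ρ := Real.rpow_pos_of_pos hv ρ
  have hwv : 0 < w * v ^ ρ := mul_pos hw hvρ
  have h1ρ : 1 + ρ ≠ 0 := (neg_lt_iff_pos_add'.mp hρ).ne'
  rw [Real.logb_div hq hw.ne', Real.logb_div hq hv.ne',
    Real.logb_div hq (Real.rpow_pos_of_pos hwv _).ne', Real.logb_rpow_eq_mul_logb_of_pos hwv,
    Real.logb_mul hw.ne' hvρ.ne', Real.logb_rpow_eq_mul_logb_of_pos hv]
  field_simp
  ring

section Tilting

variable {X Y : Type*} {W : X → Y → ℝ} {V : Y → ℝ} {ρ : ℝ}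

theorem tiltedKernel_nonneg (hW : ∀ x y, 0 ≤ W x y) (hV : ∀ y, 0 ≤ V y) (x : X) (y : Y) :
    0 ≤ tiltedKernel W V ρ x y :=
  Real.rpow_nonneg (mul_nonneg (hW x y) (Real.rpow_nonneg (hV y) _)) _

theorem tiltedKernel_eq_zero_iff (hρ : -1 < ρ) (hW : ∀ x y, 0 ≤ W x y) (hV : ∀ y, 0 ≤ V y)
    (x : X) (y : Y) : tiltedKernel W V ρ x y = 0 ↔ W x y = 0 ∨ V y = 0 ∧ ρ ≠ 0 := by
  have hexp : 1 / (1 + ρ) ≠ 0 := (one_div_pos.mpr (neg_lt_iff_pos_add'.mp hρ)).ne'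
  rw [tiltedKernel, Real.rpow_eq_zero (mul_nonneg (hW x y) (Real.rpow_nonneg (hV y) _)) hexp,
    mul_eq_zero, Real.rpow_eq_zero_iff_of_nonneg (hV y)]

theorem tiltedKernel_eq_zero (hρ : -1 < ρ) {x : X} {y : Y} (hWxy : W x y = 0) :
    tiltedKernel W V ρ x y = 0 := by
  have hexp : 1 / (1 + ρ) ≠ 0 := (one_div_pos.mpr (neg_lt_iff_pos_add'.mp hρ)).ne'
  rw [tiltedKernel, hWxy, zero_mul, Real.zero_rpow hexp]

theorem continuousOn_tiltedKernel (hV : ∀ y, 0 ≤ V y) (hVW : ∀ x y, V y = 0 → W x y = 0)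
    (x : X) (y : Y) : ContinuousOn (fun ρ => tiltedKernel W V ρ x y) (Set.Ioi (-1)) := by
  by_cases hWxy : W x y = 0
  · exact (continuousOn_const (c := (0 : ℝ))).congr fun ρ hρ => tiltedKernel_eq_zero hρ hWxy
  · have hVy : 0 < V y := (hV y).lt_of_ne' (mt (hVW x y) hWxy)
    have hpow : Continuous fun ρ : ℝ => V y ^ ρ :=
      continuous_iff_continuousAt.mpr fun ρ => Real.continuousAt_const_rpow hVy.ne'
    have hexp : ContinuousOn (fun ρ : ℝ => 1 / (1 + ρ)) (Set.Ioi (-1)) :=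
      continuousOn_const.div (by fun_prop) fun ρ hρ => (neg_lt_iff_pos_add'.mp hρ).ne'
    exact (continuous_const.mul hpow).continuousOn.rpow hexp fun ρ _ =>
      Or.inl (mul_ne_zero hWxy (Real.rpow_pos_of_pos hVy ρ).ne')

theorem exists_indicator_support_ne_zero (hW : ∀ x y, W x y ≠ 0) (hV : V ≠ 0) (x : X) :
    ∃ y, (Function.support V).indicator (W x) y ≠ 0 := by
  obtain ⟨y, hy⟩ := Function.ne_iff.mp hV
  exact ⟨y, (Set.indicator_of_mem (Function.mem_support.mpr hy) (W x)).trans_ne (hW x y)⟩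

variable [Fintype Y]

theorem sum_tiltedKernel_ne_zero (hρ : -1 < ρ) (hW : ∀ x y, 0 ≤ W x y) (hV : ∀ y, 0 ≤ V y)
    (hVW : ∀ x y, V y = 0 → W x y = 0) (hrow : ∀ x, ∃ y, W x y ≠ 0) (x : X) :
    ∑ y, tiltedKernel W V ρ x y ≠ 0 := fun hsum => by
  obtain ⟨y, hy⟩ := hrow x
  have hzero := (Finset.sum_eq_zero_iff_of_nonneg fun y _ => tiltedKernel_nonneg hW hV x y).mp
    hsum y (Finset.mem_univ y)
  exact hy (((tiltedKernel_eq_zero_iff hρ hW hV x y).mp hzero).elim id fun h => hVW x y h.1)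

theorem rowNormalize_tiltedKernel_mem_stdSimplex (hρ : -1 < ρ) (hW : ∀ x y, 0 ≤ W x y)
    (hV : ∀ y, 0 ≤ V y) (hVW : ∀ x y, V y = 0 → W x y = 0) (hrow : ∀ x, ∃ y, W x y ≠ 0) (x : X) :
    rowNormalize (tiltedKernel W V ρ) x ∈ stdSimplex ℝ Y :=
  rowNormalize_mem_stdSimplex (tiltedKernel_nonneg hW hV x)
    (sum_tiltedKernel_ne_zero hρ hW hV hVW hrow x)

theorem condAbsCont_rowNormalize_tiltedKernel (hρ : -1 < ρ) {P : X → ℝ} :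
    CondAbsCont P (rowNormalize (tiltedKernel W V ρ)) W := fun x y _ hWxy => by
  rw [rowNormalize, tiltedKernel_eq_zero hρ hWxy, zero_div]

theorem continuousOn_rowNormalize_tiltedKernel (hW : ∀ x y, 0 ≤ W x y) (hV : ∀ y, 0 ≤ V y)
    (hVW : ∀ x y, V y = 0 → W x y = 0) (hrow : ∀ x, ∃ y, W x y ≠ 0) :
    ContinuousOn (fun ρ => rowNormalize (tiltedKernel W V ρ)) (Set.Ioi (-1)) := by
  refine continuousOn_pi.mpr fun x => continuousOn_pi.mpr fun y => ?_
  exact (continuousOn_tiltedKernel hV hVW x y).div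
    (continuousOn_finsetSum _ fun y' _ => continuousOn_tiltedKernel hV hVW x y')
    fun ρ hρ => sum_tiltedKernel_ne_zero hρ hW hV hVW hrow x

end Tilting

section Duality

variable {X Y : Type*} [Fintype X] [Fintype Y] {P : X → ℝ} {Q W : X → Y → ℝ} {V : Y → ℝ} {ρ : ℝ}

theorem condDiv2_add_mul_condDiv2_const (hρ : -1 < ρ) (hW : ∀ x y, 0 ≤ W x y)
    (hV : ∀ y, 0 ≤ V y) (hQW : CondAbsCont P Q W) (hQV : CondAbsCont P Q fun _ => V) :
    condDiv2 P Q W + ρ * condDiv2 P Q (fun _ => V) =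
      (1 + ρ) * condDiv2 P Q (tiltedKernel W V ρ) := by
  simp only [condDiv2, Finset.mul_sum, ← Finset.sum_add_distrib]
  refine Finset.sum_congr rfl fun x _ => Finset.sum_congr rfl fun y _ => ?_
  by_cases hx : P x = 0
  · simp only [hx, zero_mul, mul_zero, add_zero]
  · have hterm := mul_logb_add_mul_mul_logb (b := 2) hρ (hW x y) (hV y) (hQW x y hx) (hQV x y hx)
    rw [tiltedKernel]
    linear_combination P x * hterm

theorem gallagerFunction_le (hρ : -1 < ρ) (hP : ∀ x, 0 ≤ P x) (hQ : ∀ x, Q x ∈ stdSimplex ℝ Y)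
    (hW : ∀ x y, 0 ≤ W x y) (hV : ∀ y, 0 ≤ V y) (hQW : CondAbsCont P Q W)
    (hQV : CondAbsCont P Q fun _ => V) :
    gallagerFunction P W V ρ ≤ condDiv2 P Q W + ρ * condDiv2 P Q fun _ => V := by
  have hQA : CondAbsCont P Q (tiltedKernel W V ρ) := fun x y hx hA =>
    ((tiltedKernel_eq_zero_iff hρ hW hV x y).mp hA).elim (hQW x y hx) fun h => hQV x y hx h.1
  rw [condDiv2_add_mul_condDiv2_const hρ hW hV hQW hQV, gallagerFunction, neg_mul_comm]
  exact mul_le_mul_of_nonneg_left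
    (neg_sum_mul_logb_sum_le_condDiv2 hP hQ (tiltedKernel_nonneg hW hV) hQA)
    (neg_lt_iff_pos_add'.mp hρ).le

theorem gallagerFunction_sub_le (hρ : ρ ∈ Set.Icc (0 : ℝ) 1) (hP : ∀ x, 0 ≤ P x)
    (hQ : ∀ x, Q x ∈ stdSimplex ℝ Y) (hW : ∀ x y, 0 ≤ W x y) (hV : ∀ y, 0 ≤ V y)
    (hQW : CondAbsCont P Q W) (hQV : CondAbsCont P Q fun _ => V) (R : ℝ) :
    gallagerFunction P W V ρ - ρ * R ≤
      condDiv2 P Q W + max (condDiv2 P Q (fun _ => V) - R) 0 :=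
  calc gallagerFunction P W V ρ - ρ * R
    _ ≤ condDiv2 P Q W + ρ * condDiv2 P Q (fun _ => V) - ρ * R := by
      gcongr
      exact gallagerFunction_le (neg_one_lt_zero.trans_le hρ.1) hP hQ hW hV hQW hQV
    _ = condDiv2 P Q W + ρ * (condDiv2 P Q (fun _ => V) - R) := by ring
    _ ≤ condDiv2 P Q W + max (condDiv2 P Q (fun _ => V) - R) 0 := by
      gcongr
      exact mul_le_max_zero_of_mem_Icc hρ _

theorem gallagerFunction_eq (hρ : -1 < ρ) (hW : ∀ x y, 0 ≤ W x y) (hV : ∀ y, 0 ≤ V y)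
    (hVW : ∀ x y, V y = 0 → W x y = 0) (hrow : ∀ x, ∃ y, W x y ≠ 0) :
    gallagerFunction P W V ρ = condDiv2 P (rowNormalize (tiltedKernel W V ρ)) W +
      ρ * condDiv2 P (rowNormalize (tiltedKernel W V ρ)) fun _ => V := by
  rw [condDiv2_add_mul_condDiv2_const hρ hW hV
      (condAbsCont_rowNormalize_tiltedKernel hρ)
      (fun x y hx hy => condAbsCont_rowNormalize_tiltedKernel hρ x y hx (hVW x y hy)),
    condDiv2_rowNormalize_self (sum_tiltedKernel_ne_zero hρ hW hV hVW hrow),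
    gallagerFunction, neg_mul_comm]

theorem continuousOn_gallagerFunction (hW : ∀ x y, 0 ≤ W x y) (hV : ∀ y, 0 ≤ V y)
    (hVW : ∀ x y, V y = 0 → W x y = 0) (hrow : ∀ x, ∃ y, W x y ≠ 0) :
    ContinuousOn (gallagerFunction P W V) (Set.Ioi (-1)) := by
  have hQ := continuousOn_rowNormalize_tiltedKernel hW hV hVW hrow
  refine ContinuousOn.congr ?_ fun ρ hρ => gallagerFunction_eq hρ hW hV hVW hrow
  exact (continuous_condDiv2.comp_continuousOn hQ).add
    (continuousOn_id.mul (continuous_condDiv2.comp_continuousOn hQ))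

theorem exists_condDiv2_add_max_eq_gallagerFunction (hW : ∀ x y, 0 ≤ W x y)
    (hV : ∀ y, 0 ≤ V y) (hVW : ∀ x y, V y = 0 → W x y = 0) (hrow : ∀ x, ∃ y, W x y ≠ 0) (R : ℝ) :
    ∃ ρ ∈ Set.Icc (0 : ℝ) 1, condDiv2 P (rowNormalize (tiltedKernel W V ρ)) W +
        max (condDiv2 P (rowNormalize (tiltedKernel W V ρ)) (fun _ => V) - R) 0 =
      gallagerFunction P W V ρ - ρ * R := by
  have hIcc : Set.Icc (0 : ℝ) 1 ⊆ Set.Ioi (-1) := fun ρ hρ => neg_one_lt_zero.trans_le hρ.1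
  have hQ := (continuousOn_rowNormalize_tiltedKernel hW hV hVW hrow).mono hIcc
  obtain ⟨ρ, hρ, hslack⟩ := exists_max_zero_eq_mul_of_continuousOn
    (g := fun ρ => condDiv2 P (rowNormalize (tiltedKernel W V ρ)) (fun _ => V) - R)
    ((continuous_condDiv2.comp_continuousOn hQ).sub continuousOn_const)
  refine ⟨ρ, hρ, ?_⟩
  rw [hslack, gallagerFunction_eq (hIcc hρ) hW hV hVW hrow]
  ring

theorem gallagerFunction_indicator_support (hρ : ρ ≠ 0) :
    gallagerFunction P (fun x => (Function.support V).indicator (W x)) V ρ =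
      gallagerFunction P W V ρ := by
  have hA : ∀ x y, tiltedKernel (fun x => (Function.support V).indicator (W x)) V ρ x y =
      tiltedKernel W V ρ x y := fun x y => by
    by_cases hy : V y = 0
    · simp only [tiltedKernel, hy, Real.zero_rpow hρ, mul_zero]
    · rw [tiltedKernel, Set.indicator_of_mem (Function.mem_support.mpr hy), tiltedKernel]
  simp only [gallagerFunction, hA]

theorem bddAbove_range_gallagerFunction_sub (hP : ∀ x, 0 ≤ P x) (hW : ∀ x y, 0 < W x y)
    (hV : V ∈ stdSimplex ℝ Y) (R : ℝ) :
    BddAbove (Set.range fun ρ : Set.Icc (0 : ℝ) 1 => gallagerFunction P W V ρ - ρ * R) :=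
  ⟨_, Set.forall_mem_range.mpr fun ρ => gallagerFunction_sub_le ρ.2 hP (fun _ => hV)
    (fun x y => (hW x y).le) hV.1 (fun x y _ h => absurd h (hW x y).ne') (fun _ _ _ => id) R⟩

/-- Zeros of `V` make the dual objective jump at `ρ = 0`, because `0 ^ 0 = 1`. Restricting `W` to
the support of `V` changes it at no other `ρ` and makes it continuous, so that the supremum still
dominates the restricted value at `0`. -/
theorem gallagerFunction_indicator_support_sub_le_iSup (hP : ∀ x, 0 ≤ P x)
    (hW : ∀ x y, 0 < W x y) (hV : V ∈ stdSimplex ℝ Y) (hρ : ρ ∈ Set.Icc (0 : ℝ) 1) (R : ℝ) :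
    gallagerFunction P (fun x => (Function.support V).indicator (W x)) V ρ - ρ * R ≤
      ⨆ ρ : Set.Icc (0 : ℝ) 1, gallagerFunction P W V ρ - ρ * R := by
  have hcont : ContinuousOn (fun ρ =>
      gallagerFunction P (fun x => (Function.support V).indicator (W x)) V ρ - ρ * R)
      (Set.Ioi (-1)) :=
    (continuousOn_gallagerFunction (fun x => Set.indicator_nonneg fun y _ => (hW x y).le) hV.1
      (fun _ _ hy => Set.indicator_of_notMem (Function.notMem_support.mpr hy) _)
      (exists_indicator_support_ne_zero (fun x y => (hW x y).ne')
        (ne_zero_of_mem_stdSimplex hV))).sub (by fun_prop)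
  have hIoc : Set.Ioc (0 : ℝ) 1 ⊆ Set.Ioi (-1) := fun ρ hρ => neg_one_lt_zero.trans hρ.1
  refine ContinuousWithinAt.closure_le (s := Set.Ioc 0 1) ?_
    ((hcont ρ (neg_one_lt_zero.trans_le hρ.1)).mono hIoc) continuousWithinAt_const fun σ hσ => ?_
  · rwa [closure_Ioc zero_ne_one]
  · rw [gallagerFunction_indicator_support hσ.1.ne']
    exact le_ciSup (bddAbove_range_gallagerFunction_sub hP hW hV R) ⟨σ, Set.Ioc_subset_Icc_self hσ⟩

theorem exists_channel_le_iSup_gallagerFunction_sub (hP : P ∈ stdSimplex ℝ X)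
    (hW : ∀ x y, 0 < W x y) (hV : V ∈ stdSimplex ℝ Y) (R : ℝ) :
    ∃ Q : X → Y → ℝ, (∀ x, Q x ∈ stdSimplex ℝ Y) ∧
      condDiv2 P Q W + max (mutInfo2 P Q - R) 0 ≤
        ⨆ ρ : Set.Icc (0 : ℝ) 1, gallagerFunction P W V ρ - ρ * R := by
  set W' : X → Y → ℝ := fun x => (Function.support V).indicator (W x) with hW'
  have hW'0 : ∀ x y, 0 ≤ W' x y := fun x => Set.indicator_nonneg fun y _ => (hW x y).le
  have hVW' : ∀ x y, V y = 0 → W' x y = 0 := fun _ _ hy =>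
    Set.indicator_of_notMem (Function.notMem_support.mpr hy) _
  have hrow : ∀ x, ∃ y, W' x y ≠ 0 :=
    exists_indicator_support_ne_zero (fun x y => (hW x y).ne') (ne_zero_of_mem_stdSimplex hV)
  obtain ⟨ρ, hρ, hdual⟩ :=
    exists_condDiv2_add_max_eq_gallagerFunction (P := P) hW'0 hV.1 hVW' hrow R
  have hρ' : -1 < ρ := neg_one_lt_zero.trans_le hρ.1
  set Q := rowNormalize (tiltedKernel W' V ρ)
  have hQ : ∀ x, Q x ∈ stdSimplex ℝ Y :=
    rowNormalize_tiltedKernel_mem_stdSimplex hρ' hW'0 hV.1 hVW' hrow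
  have hQV : CondAbsCont P Q fun _ => V := fun x y hx hy =>
    condAbsCont_rowNormalize_tiltedKernel hρ' x y hx (hVW' x y hy)
  refine ⟨Q, hQ, ?_⟩
  calc condDiv2 P Q W + max (mutInfo2 P Q - R) 0
    _ ≤ condDiv2 P Q W + max (condDiv2 P Q (fun _ => V) - R) 0 := by
      gcongr
      exact mutInfo2_le_condDiv2_const hP hQ hV hQV
    _ = gallagerFunction P W' V ρ - ρ * R := by rw [← hdual, hW', condDiv2_indicator_support hQV]
    _ ≤ ⨆ ρ : Set.Icc (0 : ℝ) 1, gallagerFunction P W V ρ - ρ * R :=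
      gallagerFunction_indicator_support_sub_le_iSup hP.1 hW hV hρ R

theorem iSup_gallagerFunction_outputDist_sub_le (hP : ∀ x, 0 ≤ P x) (hW : ∀ x y, 0 < W x y)
    (hQ : ∀ x, Q x ∈ stdSimplex ℝ Y) (R : ℝ) :
    ⨆ ρ : Set.Icc (0 : ℝ) 1, gallagerFunction P W (outputDist P Q) ρ - ρ * R ≤
      condDiv2 P Q W + max (mutInfo2 P Q - R) 0 := by
  have hQ0 : ∀ x y, 0 ≤ Q x y := fun x => (hQ x).1
  rw [mutInfo2_eq_condDiv2_outputDist]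
  exact ciSup_le fun ρ => gallagerFunction_sub_le ρ.2 hP hQ (fun x y => (hW x y).le)
    (outputDist_nonneg hP hQ0) (fun x y _ h => absurd h (hW x y).ne')
    (condAbsCont_outputDist hP hQ0) R

theorem bddBelow_range_condDiv2_add_max (hP : ∀ x, 0 ≤ P x) (hW : ∀ x y, 0 < W x y) (R : ℝ) :
    BddBelow (Set.range fun Q : {Q : X → Y → ℝ // (∀ x y, 0 ≤ Q x y) ∧ ∀ x, ∑ y, Q x y = 1} =>
      condDiv2 P Q.1 W + max (mutInfo2 P Q.1 - R) 0) :=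
  ⟨_, Set.forall_mem_range.mpr fun Q => (neg_sum_mul_logb_sum_le_condDiv2 hP
    (fun x => ⟨Q.2.1 x, Q.2.2 x⟩) (fun x y => (hW x y).le)
    fun x y _ h => absurd h (hW x y).ne').trans (le_add_of_nonneg_right (le_max_right _ 0))⟩

end Duality

theorem cc_exponent_dual_form_general {X Y : Type*} [Fintype X] [Fintype Y] [Nonempty Y]
    {P : X → ℝ} (hP : P ∈ stdSimplex ℝ X) {W : X → Y → ℝ} (hW : ∀ x y, 0 < W x y) (R : ℝ) :
    (⨅ Q : {Q : X → Y → ℝ // (∀ x y, 0 ≤ Q x y) ∧ ∀ x, ∑ y, Q x y = 1},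
        condDiv2 P Q.1 W + max (mutInfo2 P Q.1 - R) 0) =
      ⨅ V : {V : Y → ℝ // (∀ y, 0 ≤ V y) ∧ ∑ y, V y = 1},
        ⨆ ρ : Set.Icc (0 : ℝ) 1, gallagerFunction P W V.1 ρ - ρ * R := by
  obtain ⟨V₀⟩ : Nonempty (stdSimplex ℝ Y) := inferInstance
  have : Nonempty {V : Y → ℝ // (∀ y, 0 ≤ V y) ∧ ∑ y, V y = 1} := ⟨V₀⟩
  have : Nonempty {Q : X → Y → ℝ // (∀ x y, 0 ≤ Q x y) ∧ ∀ x, ∑ y, Q x y = 1} :=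
    ⟨⟨fun _ => V₀, fun _ => V₀.2.1, fun _ => V₀.2.2⟩⟩
  have primal_le : ∀ V : {V : Y → ℝ // (∀ y, 0 ≤ V y) ∧ ∑ y, V y = 1},
      (⨅ Q : {Q : X → Y → ℝ // (∀ x y, 0 ≤ Q x y) ∧ ∀ x, ∑ y, Q x y = 1},
        condDiv2 P Q.1 W + max (mutInfo2 P Q.1 - R) 0) ≤
      ⨆ ρ : Set.Icc (0 : ℝ) 1, gallagerFunction P W V.1 ρ - ρ * R := fun V => by
    obtain ⟨Q, hQ, hle⟩ := exists_channel_le_iSup_gallagerFunction_sub hP hW V.2 R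
    exact ciInf_le_of_le (bddBelow_range_condDiv2_add_max hP.1 hW R)
      ⟨Q, fun x => (hQ x).1, fun x => (hQ x).2⟩ hle
  refine le_antisymm (le_ciInf primal_le) (le_ciInf fun Q => ?_)
  have hQ : ∀ x, Q.1 x ∈ stdSimplex ℝ Y := fun x => ⟨Q.2.1 x, Q.2.2 x⟩
  exact ciInf_le_of_le ⟨_, Set.forall_mem_range.mpr primal_le⟩
    ⟨outputDist P Q.1, outputDist_mem_stdSimplex hP hQ⟩
    (iSup_gallagerFunction_outputDist_sub_le hP.1 hW hQ R)

/-- Lagrange-dual (Gallager-style) form of the constant-composition random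
coding error exponent:
`min_Q { D(Q‖W|P_X) + [I_Q(X;Y) − R]_+ }
  = min_V max_{ρ∈[0,1]} { −(1+ρ) Σ_x P_X(x) log₂( Σ_y (W(y|x) V(y)^ρ)^{1/(1+ρ)} ) − ρR }`. -/
theorem cc_exponent_dual_form
    {X Y : Type*} [Fintype X] [Fintype Y] [Nonempty X] [Nonempty Y]
    (P : X → ℝ) (hP0 : ∀ x, 0 ≤ P x) (hP1 : ∑ x, P x = 1)
    (W : X → Y → ℝ) (hW : ∀ x y, 0 < W x y) (hWsum : ∀ x, ∑ y, W x y = 1)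
    (R : ℝ) :
    (⨅ Q : {Q : X → Y → ℝ // (∀ x y, 0 ≤ Q x y) ∧ ∀ x, ∑ y, Q x y = 1},
        condDiv2 P Q.1 W + max (mutInfo2 P Q.1 - R) 0) =
      ⨅ V : {V : Y → ℝ // (∀ y, 0 ≤ V y) ∧ ∑ y, V y = 1},
        ⨆ ρ : Set.Icc (0:ℝ) 1,
          (-(1 + ρ.1) *
              ∑ x, P x * Real.logb 2
                (∑ y, (W x y * V.1 y ^ (ρ.1 : ℝ)) ^ (1 / (1 + ρ.1)))
            - ρ.1 * R) :=
  cc_exponent_dual_form_general ⟨hP0, hP1⟩ hW R
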